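/- arXiv:2110.08694 — 4 statements merged into one kernel-verified Lean document; each statement's English description precedes it below -/
import Mathlib

section
/- There exist finitely many binomials h_1, …, h_m ∈ 𝔅 such that for every a, b ∈ ℤ_{≥0}^L with Σ_i a_i s_i = Σ_i b_i s_i there exist polynomials g_1, …, g_m ∈ R[y_1,…,y_L] with y^a − y^b = Σ_{i=1}^m g_i h_i and deg(g_i) ≤ max{|a|, |b|} for all i. -/
/-!
The pairs `(a, b)` of exponents of equal weight form a submonoid of `ℕ^L × ℕ^L` that is closed under
subtraction, hence finitely generated by Gordan's lemma; the binomials of a finite generating family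
serve as the `hᵢ`. Adding a generator `(u, v)` to a pair `(c, d)` changes the binomial by
`y^(u+c) - y^(v+d) = y^u (y^c - y^d) + y^d (y^u - y^v) = y^v (y^c - y^d) + y^c (y^u - y^v)`.
Using the first form when `|u| ≤ |v|` and the second one otherwise keeps the degrees of the
coefficients bounded, since `min |u| |v| + max |c| |d| ≤ max (|u| + |c|) (|v| + |d|)`.
-/

section BoundedCombinations

open MvPolynomial

variable {R σ ι : Type*} [CommSemiring R] [Fintype ι]

/-- The `R`-submodule of the ideal generated by the family `h` that consists of the combinations
`∑ i, g i * h i` with all coefficients `g i` of total degree at most `N`. -/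
noncomputable def boundedCombinations (h : ι → MvPolynomial σ R) (N : ℕ) :
    Submodule R (MvPolynomial σ R) :=
  (Submodule.pi Set.univ fun _ => restrictTotalDegree σ R N).map
    ((Fintype.linearCombination (MvPolynomial σ R) h).restrictScalars R)

variable {h : ι → MvPolynomial σ R} {m N : ℕ} {p f : MvPolynomial σ R}

theorem mem_boundedCombinations :
    f ∈ boundedCombinations h N ↔
      ∃ g : ι → MvPolynomial σ R, (∀ i, (g i).totalDegree ≤ N) ∧ ∑ i, g i * h i = f := by
  simp [boundedCombinations, Submodule.mem_map, Fintype.linearCombination_apply,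
    mem_restrictTotalDegree]

theorem boundedCombinations_mono (hmN : m ≤ N) :
    boundedCombinations h m ≤ boundedCombinations h N := by
  intro f hf
  obtain ⟨g, hg, rfl⟩ := mem_boundedCombinations.1 hf
  exact mem_boundedCombinations.2 ⟨g, fun i => (hg i).trans hmN, rfl⟩

theorem mul_mem_boundedCombinations (hp : p.totalDegree ≤ m) (hf : f ∈ boundedCombinations h N) :
    p * f ∈ boundedCombinations h (m + N) := by
  obtain ⟨g, hg, rfl⟩ := mem_boundedCombinations.1 hf
  exact mem_boundedCombinations.2 ⟨fun i => p * g i,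
    fun i => (totalDegree_mul _ _).trans (add_le_add hp (hg i)), by
      simp only [mul_assoc, Finset.mul_sum]⟩

theorem mul_generator_mem_boundedCombinations (hp : p.totalDegree ≤ N) (i : ι) :
    p * h i ∈ boundedCombinations h N := by
  classical
  refine mem_boundedCombinations.2 ⟨Pi.single i p, fun j => ?_, ?_⟩
  · rcases eq_or_ne j i with rfl | hji
    · simpa using hp
    · simp [hji]
  · exact Fintype.linearCombination_apply_single (MvPolynomial σ R) h i p

end BoundedCombinations

section PureBinomial

open MvPolynomial

variable {σ ι : Type*} (R : Type*) [CommRing R]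

/-- The pure difference binomial `y^a - y^b` of a pair `x = (a, b)` of exponents. The exponents are
paired up because binomials are manipulated through the addition of `ℕ^σ × ℕ^σ`. -/
noncomputable def pureBinomial (x : (σ →₀ ℕ) × (σ →₀ ℕ)) : MvPolynomial σ R :=
  monomial x.1 1 - monomial x.2 1

theorem pureBinomial_add (x y : (σ →₀ ℕ) × (σ →₀ ℕ)) :
    pureBinomial R (x + y) =
      monomial x.1 1 * pureBinomial R y + monomial y.2 1 * pureBinomial R x := by
  simp only [pureBinomial, mul_sub, monomial_mul, mul_one, Prod.fst_add, Prod.snd_add,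
    add_comm y.2]
  abel

theorem pureBinomial_add' (x y : (σ →₀ ℕ) × (σ →₀ ℕ)) :
    pureBinomial R (x + y) =
      monomial x.2 1 * pureBinomial R y + monomial y.1 1 * pureBinomial R x := by
  simp only [pureBinomial, mul_sub, monomial_mul, mul_one, Prod.fst_add, Prod.snd_add,
    add_comm y.1]
  abel

variable [Fintype ι] (t : ι → (σ →₀ ℕ) × (σ →₀ ℕ))

theorem pureBinomial_generator_add_mem_boundedCombinations (i : ι) {x : (σ →₀ ℕ) × (σ →₀ ℕ)}
    (hx : pureBinomial R x ∈
      boundedCombinations (fun j => pureBinomial R (t j)) (max x.1.degree x.2.degree)) :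
    pureBinomial R (t i + x) ∈ boundedCombinations (fun j => pureBinomial R (t j))
      (max (t i + x).1.degree (t i + x).2.degree) := by
  have combine {p q : σ →₀ ℕ} {N : ℕ} (hp : p.degree + max x.1.degree x.2.degree ≤ N)
      (hq : q.degree ≤ N) :
      monomial p 1 * pureBinomial R x + monomial q 1 * pureBinomial R (t i) ∈
        boundedCombinations (fun j => pureBinomial R (t j)) N :=
    add_mem
      (boundedCombinations_mono hp (mul_mem_boundedCombinations (totalDegree_monomial_le p 1) hx))
      (mul_generator_mem_boundedCombinations ((totalDegree_monomial_le q 1).trans hq) i)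
  simp only [Prod.fst_add, Prod.snd_add, map_add]
  rcases le_total (t i).1.degree (t i).2.degree with hle | hle
  · rw [pureBinomial_add]
    exact combine (by lia) (by lia)
  · rw [pureBinomial_add']
    exact combine (by lia) (by lia)

theorem pureBinomial_mem_boundedCombinations_of_mem_closure {x : (σ →₀ ℕ) × (σ →₀ ℕ)}
    (hx : x ∈ AddSubmonoid.closure (Set.range t)) :
    pureBinomial R x ∈
      boundedCombinations (fun j => pureBinomial R (t j)) (max x.1.degree x.2.degree) := by
  induction hx using AddSubmonoid.closure_induction_left with
  | zero => simp [pureBinomial]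
  | add_left _ hgen x _ ih =>
    obtain ⟨i, rfl⟩ := hgen
    exact pureBinomial_generator_add_mem_boundedCombinations R t i ih

end PureBinomial

theorem exists_fin_closure_range_eq_of_fg {A : Type*} [AddMonoid A] {S : AddSubmonoid A}
    (hS : S.FG) : ∃ (m : ℕ) (t : Fin m → A), AddSubmonoid.closure (Set.range t) = S := by
  obtain ⟨T, hT, hfin⟩ := S.fg_iff.1 hS
  obtain ⟨m, t, -, rfl⟩ := hfin.fin_param
  exact ⟨m, t, hT⟩

/-- The kernel pair of an additive homomorphism `w`, as a submonoid: for `w a = ∑ j, a j • s j` it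
consists of the pairs of exponents whose binomials lie in the toric ideal of `s`. -/
def kernelPairs {A M : Type*} [AddMonoid A] [AddMonoid M] (w : A →+ M) : AddSubmonoid (A × A) :=
  (w.comp (AddMonoidHom.fst A A)).eqLocusM (w.comp (AddMonoidHom.snd A A))

theorem fg_kernelPairs {A M : Type*} [AddCommMonoid A] [PartialOrder A] [WellQuasiOrderedLE A]
    [IsOrderedCancelAddMonoid A] [CanonicallyOrderedAdd A] [AddMonoid M] [IsCancelAdd M]
    (w : A →+ M) : (kernelPairs w).FG :=
  AddSubmonoid.fg_eqLocusM _ _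

theorem mem_kernelPairs_linearCombination {σ M : Type*} [Fintype σ] [AddCommMonoid M] (s : σ → M)
    {x : (σ →₀ ℕ) × (σ →₀ ℕ)} :
    x ∈ kernelPairs (Finsupp.linearCombination ℕ s).toAddMonoidHom ↔
      ∑ j, x.1 j • s j = ∑ j, x.2 j • s j := by
  simp [kernelPairs, Finsupp.linearCombination_apply, Finsupp.sum_fintype]

open MvPolynomial in
theorem binomial_ideal_degree_bounded_generators_general
    {σ M : Type*} [Fintype σ] [AddCancelCommMonoid M] (s : σ → M) :
    ∃ (m : ℕ) (a b : Fin m → (σ →₀ ℕ)),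
      (∀ i, ∑ j, a i j • s j = ∑ j, b i j • s j) ∧
      ∀ (R : Type*) [CommRing R] (a' b' : σ →₀ ℕ),
        (∑ j, a' j • s j = ∑ j, b' j • s j) →
        ∃ g : Fin m → MvPolynomial σ R,
          (monomial a' (1 : R) - monomial b' (1 : R) =
            ∑ i, g i * (monomial (a i) (1 : R) - monomial (b i) (1 : R))) ∧
          ∀ i, (g i).totalDegree ≤ max (∑ j, a' j) (∑ j, b' j) := by
  obtain ⟨m, t, ht⟩ := exists_fin_closure_range_eq_of_fg
    (fg_kernelPairs (Finsupp.linearCombination ℕ s).toAddMonoidHom)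
  refine ⟨m, fun i => (t i).1, fun i => (t i).2, fun i => ?_, fun R _ a' b' hab => ?_⟩
  · rw [← mem_kernelPairs_linearCombination, ← ht]
    exact AddSubmonoid.subset_closure (Set.mem_range_self i)
  · have hmem : (a', b') ∈ AddSubmonoid.closure (Set.range t) := by
      rwa [ht, mem_kernelPairs_linearCombination]
    obtain ⟨g, hdeg, hsum⟩ := mem_boundedCombinations.1
      (pureBinomial_mem_boundedCombinations_of_mem_closure R t hmem)
    exact ⟨g, hsum.symm, by simpa only [Finsupp.degree_eq_sum] using hdeg⟩

/-- There exist finitely many binomials `h₁, …, h_m` in the toric ideal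
(i.e. of the form `y^a - y^b` with `∑ aᵢ sᵢ = ∑ bᵢ sᵢ`) such that every binomial
`y^a - y^b` with `∑ aᵢ sᵢ = ∑ bᵢ sᵢ` can be written as `∑ gᵢ hᵢ` with
`deg gᵢ ≤ max (|a|) (|b|)`. -/
theorem binomial_ideal_degree_bounded_generators
    {R : Type*} [CommRing R] (L n : ℕ) (hL : 1 ≤ L) (hn : 1 ≤ n)
    (s : Fin L → Fin n → ℤ) :
    ∃ (m : ℕ) (a b : Fin m → (Fin L →₀ ℕ)),
      (∀ i, ∑ j, (a i j : ℤ) • s j = ∑ j, (b i j : ℤ) • s j) ∧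
      ∀ a' b' : Fin L →₀ ℕ,
        (∑ j, (a' j : ℤ) • s j = ∑ j, (b' j : ℤ) • s j) →
        ∃ g : Fin m → MvPolynomial (Fin L) R,
          (MvPolynomial.monomial a' (1 : R) - MvPolynomial.monomial b' (1 : R) =
            ∑ i, g i *
              (MvPolynomial.monomial (a i) (1 : R) - MvPolynomial.monomial (b i) (1 : R))) ∧
          ∀ i, (g i).totalDegree ≤ max (∑ j, a' j) (∑ j, b' j) := by
  obtain ⟨m, a, b, hab, hgen⟩ := binomial_ideal_degree_bounded_generators_general s
  exact ⟨m, a, b, by simpa only [natCast_zsmul], by simpa only [natCast_zsmul] using hgen R⟩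
end

section
/- For every nonzero u ∈ δ ∩ ℤ^n there exist finitely many elements t_1, …, t_r of the set S = {Σ_{j=1}^N r_j w_j : 0 ≤ r_j ≤ 1 for all j} ∩ ℤ^n and positive integers v_1, …, v_r such that u = Σ_{i=1}^r v_i t_i and w(u) = Σ_{i=1}^r v_i w(t_i). -/
open Pointwise

/-- The real vector associated to an integer lattice vector. -/
def intToReal (n : ℕ) (u : Fin n → ℤ) : Fin n → ℝ := fun i => (u i : ℝ)

/-- The convex cone `δ` generated by `w₁, …, w_N`. -/
def deltaCone (n N : ℕ) (w : Fin N → Fin n → ℤ) : Set (Fin n → ℝ) :=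
  {x | ∃ c : Fin N → ℝ, (∀ j, 0 ≤ c j) ∧ x = ∑ j, c j • intToReal n (w j)}

/-- The Newton polyhedron `Δ`: the convex hull of `{w₁, …, w_N} ∪ {0}`. -/
def newtonPolyhedron (n N : ℕ) (w : Fin N → Fin n → ℤ) : Set (Fin n → ℝ) :=
  convexHull ℝ (insert 0 (Set.range fun j => intToReal n (w j)))

/-- The weight function `w(u) = inf {c : 0 ≤ c ∧ u ∈ c • Δ}`. -/
noncomputable def weight (n N : ℕ) (w : Fin N → Fin n → ℤ) (u : Fin n → ℝ) : ℝ :=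
  sInf {c : ℝ | 0 ≤ c ∧ u ∈ c • newtonPolyhedron n N w}

/-- The set `S` of lattice points of the form `∑ rⱼ wⱼ` with `0 ≤ rⱼ ≤ 1`. -/
def latticeS (n N : ℕ) (w : Fin N → Fin n → ℤ) : Set (Fin n → ℤ) :=
  {s | ∃ r : Fin N → ℝ, (∀ j, 0 ≤ r j ∧ r j ≤ 1) ∧
    intToReal n s = ∑ j, r j • intToReal n (w j)}

/-!
Weight is the gauge of `Δ`, and on the cone it is the minimal total coefficient of a nonnegative
combination of the `w j`; the minimum is attained by compactness. Minimality passes down to smaller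
coefficient vectors `0 ≤ a ≤ c`: replacing `a` inside `c` by a cheaper combination with the same
value would make `c` cheaper too. Hence weight is just "sum of the coefficients" on everything below
a minimal `c`, in particular on the fractional part of `c` and on each `w j` with `1 ≤ c j`, and
`∑ c = ∑ fract c + ∑ ⌊c⌋` is the required identity.
-/

lemma gauge_eq_sInf_nonneg {E : Type*} [AddCommGroup E] [Module ℝ E] (s : Set E) (x : E) :
    gauge s x = sInf {r : ℝ | 0 ≤ r ∧ x ∈ r • s} := by
  rcases eq_or_ne x 0 with rfl | hx
  · rw [gauge_zero]
    rcases s.eq_empty_or_nonempty with rfl | hs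
    · simp
    · have hleast : IsLeast {r : ℝ | 0 ≤ r ∧ (0 : E) ∈ r • s} 0 :=
        ⟨⟨le_rfl, by simp [Set.zero_smul_set hs]⟩, fun _ hr => hr.1⟩
      exact hleast.csInf_eq.symm
  · refine congrArg sInf (Set.ext fun r => and_congr_left fun hr => ⟨le_of_lt, fun h => ?_⟩)
    refine h.lt_of_ne ?_
    rintro rfl
    exact hx (Set.zero_smul_set_subset s hr)

lemma mem_pointedConeHull_range_iff {ι R M : Type*} [Fintype ι] [Semiring R]
    [PartialOrder R] [IsOrderedRing R] [AddCommMonoid M] [Module R M] {f : ι → M} {x : M} :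
    x ∈ PointedCone.hull R (Set.range f) ↔
      ∃ c : ι → R, 0 ≤ c ∧ Fintype.linearCombination R f c = x := by
  rw [PointedCone.hull, Submodule.mem_span_range_iff_exists_fun]
  constructor
  · rintro ⟨c, rfl⟩
    exact ⟨fun j => c j, fun j => (c j).2, rfl⟩
  · rintro ⟨c, hc, rfl⟩
    exact ⟨fun j => ⟨c j, hc j⟩, rfl⟩

lemma isClosed_linearMap_fiber {𝕜 V F : Type*} [NontriviallyNormedField 𝕜] [CompleteSpace 𝕜]
    [AddCommGroup V] [Module 𝕜 V] [TopologicalSpace V] [IsTopologicalAddGroup V]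
    [ContinuousSMul 𝕜 V] [T2Space V] [AddCommGroup F] [Module 𝕜 F] (g : V →ₗ[𝕜] F)
    [FiniteDimensional 𝕜 (LinearMap.ker g)] (c : V) : IsClosed {b | g b = g c} := by
  have hker := (LinearMap.ker g).closed_of_finiteDimensional
  convert hker.preimage (continuous_sub_right c) using 1
  ext b
  simp [sub_eq_zero]

/-- The convex hull of the family `f` and the origin: the polyhedron `Δ` for vectors of an arbitrary
real vector space. -/
def originHull {ι E : Type*} [AddCommGroup E] [Module ℝ E] (f : ι → E) : Set E :=
  convexHull ℝ (insert 0 (Set.range f))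

section NonnegCombination

variable {ι E : Type*} [Fintype ι] [AddCommGroup E] [Module ℝ E] {f : ι → E}

lemma linearCombination_mem_sum_smul_originHull {a : ι → ℝ} (ha : 0 ≤ a) :
    Fintype.linearCombination ℝ f a ∈ (∑ j, a j) • originHull f := by
  rcases (Fintype.sum_nonneg ha).eq_or_lt with h | h
  · obtain rfl : a = 0 := (Fintype.sum_eq_zero_iff_of_nonneg ha).1 h.symm
    exact ⟨0, subset_convexHull ℝ _ (Set.mem_insert _ _), by simp⟩
  · refine ⟨Finset.univ.centerMass a f, ?_, ?_⟩
    · exact Finset.centerMass_mem_convexHull _ (fun j _ => ha j) h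
        fun j _ => Set.mem_insert_of_mem _ ⟨j, rfl⟩
    · simp [Finset.centerMass, smul_smul, h.ne', Fintype.linearCombination_apply]

lemma exists_linearCombination_eq_of_mem_originHull {x : E} (hx : x ∈ originHull f) :
    ∃ a : ι → ℝ, 0 ≤ a ∧ ∑ j, a j ≤ 1 ∧ Fintype.linearCombination ℝ f a = x := by
  classical
  have hlin : IsLinearMap ℝ fun a : ι → ℝ => ∑ j, a j :=
    ⟨fun a b => by simp [Finset.sum_add_distrib], fun r a => by simp [Finset.mul_sum]⟩
  have hconvex : Convex ℝ (Set.Ici 0 ∩ {a : ι → ℝ | ∑ j, a j ≤ 1}) :=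
    (convex_Ici 0).inter (convex_halfSpace_le hlin 1)
  have hsub : insert 0 (Set.range f) ⊆
      Fintype.linearCombination ℝ f '' (Set.Ici 0 ∩ {a | ∑ j, a j ≤ 1}) := by
    rintro _ (rfl | ⟨j, rfl⟩)
    · exact ⟨0, by simp, map_zero _⟩
    · exact ⟨Pi.single j 1, ⟨Pi.single_nonneg.2 zero_le_one, by simp⟩, by simp⟩
  obtain ⟨a, ⟨ha, ha1⟩, rfl⟩ := convexHull_min hsub (hconvex.linear_image _) hx
  exact ⟨a, ha, ha1, rfl⟩

/-- The nonnegative coefficient vector `c` has the least coefficient sum among all nonnegative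
combinations of `f` with the same value, i.e. it is an optimal solution of the linear program that
computes the weight of `∑ j, c j • f j`. -/
structure IsMinimalCombination (f : ι → E) (c : ι → ℝ) : Prop where
  nonneg : 0 ≤ c
  sum_le : ∀ b : ι → ℝ, 0 ≤ b →
    Fintype.linearCombination ℝ f b = Fintype.linearCombination ℝ f c → ∑ j, c j ≤ ∑ j, b j

lemma exists_isMinimalCombination {x : E} (hx : x ∈ PointedCone.hull ℝ (Set.range f)) :
    ∃ c, IsMinimalCombination f c ∧ Fintype.linearCombination ℝ f c = x := by
  obtain ⟨c₀, hc₀, rfl⟩ := mem_pointedConeHull_range_iff.1 hx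
  have le_sum {b : ι → ℝ} (hb : 0 ≤ b) (j : ι) : b j ≤ ∑ k, b k :=
    Finset.single_le_sum (fun k _ => hb k) (Finset.mem_univ j)
  have hcompact : IsCompact (Set.Icc 0 (fun _ => ∑ j, c₀ j) ∩
      {b | Fintype.linearCombination ℝ f b = Fintype.linearCombination ℝ f c₀}) :=
    isCompact_Icc.inter_right (isClosed_linearMap_fiber _ c₀)
  obtain ⟨c, ⟨⟨hc, -⟩, hcx⟩, hmin⟩ := hcompact.exists_isMinOn ⟨c₀, ⟨hc₀, le_sum hc₀⟩, rfl⟩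
    (f := fun b : ι → ℝ => ∑ j, b j) (by fun_prop)
  refine ⟨c, ⟨hc, fun b hb hbc => ?_⟩, hcx⟩
  rcases le_total (∑ j, b j) (∑ j, c₀ j) with h | h
  · exact hmin ⟨⟨hb, fun j => (le_sum hb j).trans h⟩, hbc.trans hcx⟩
  · exact (hmin ⟨⟨hc₀, le_sum hc₀⟩, rfl⟩).trans h

namespace IsMinimalCombination

variable {a c : ι → ℝ}

lemma of_le (hc : IsMinimalCombination f c) (ha : 0 ≤ a) (hac : a ≤ c) :
    IsMinimalCombination f a := by
  refine ⟨ha, fun b hb hba => ?_⟩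
  have h := hc.sum_le (b + (c - a)) (add_nonneg hb (sub_nonneg.2 hac)) (by simp [hba])
  simp only [Pi.add_apply, Pi.sub_apply, Finset.sum_add_distrib, Finset.sum_sub_distrib] at h
  linarith

lemma gauge_eq_sum (hc : IsMinimalCombination f c) :
    gauge (originHull f) (Fintype.linearCombination ℝ f c) = ∑ j, c j := by
  rw [gauge_eq_sInf_nonneg]
  refine IsLeast.csInf_eq
    ⟨⟨Fintype.sum_nonneg hc.nonneg, linearCombination_mem_sum_smul_originHull hc.nonneg⟩, ?_⟩
  rintro r ⟨hr, y, hy, hyc⟩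
  obtain ⟨b, hb, hb1, rfl⟩ := exists_linearCombination_eq_of_mem_originHull hy
  calc ∑ j, c j ≤ ∑ j, (r • b) j := hc.sum_le _ (smul_nonneg hr hb) (by rw [map_smul]; exact hyc)
    _ = r * ∑ j, b j := by simp [Finset.mul_sum]
    _ ≤ r := mul_le_of_le_one_right hr hb1

lemma gauge_eq_one (hc : IsMinimalCombination f c) {j : ι} (hj : 1 ≤ c j) :
    gauge (originHull f) (f j) = 1 := by
  classical
  have hle : Pi.single j 1 ≤ c := update_le_iff.2 ⟨hj, fun k _ => hc.nonneg k⟩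
  simpa using (hc.of_le (Pi.single_nonneg.2 zero_le_one) hle).gauge_eq_sum

lemma gauge_eq_gauge_fract_add (hc : IsMinimalCombination f c) :
    gauge (originHull f) (Fintype.linearCombination ℝ f c) =
      gauge (originHull f) (Fintype.linearCombination ℝ f fun j => Int.fract (c j)) +
        ∑ j, ⌊c j⌋₊ * gauge (originHull f) (f j) := by
  have hfract : IsMinimalCombination f fun j => Int.fract (c j) :=
    hc.of_le (fun j => Int.fract_nonneg _) fun j =>
      sub_le_self _ (Int.cast_nonneg (Int.floor_nonneg.2 (hc.nonneg j)))
  have hfloor (j : ι) : ⌊c j⌋₊ * gauge (originHull f) (f j) = ⌊c j⌋₊ := by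
    rcases Nat.eq_zero_or_pos ⌊c j⌋₊ with h | h
    · simp [h]
    · rw [hc.gauge_eq_one (Nat.floor_pos.1 h), mul_one]
  simp_rw [hc.gauge_eq_sum, hfract.gauge_eq_sum, hfloor, ← Finset.sum_add_distrib,
    natCast_floor_eq_intCast_floor (hc.nonneg _), Int.fract_add_floor]

end IsMinimalCombination

end NonnegCombination

lemma exists_fin_injective_range_eq {κ : Type*} [Finite κ] (s : Set κ) :
    ∃ (r : ℕ) (e : Fin r → κ), e.Injective ∧ Set.range e = s := by
  obtain ⟨r, ⟨e⟩⟩ := Finite.exists_equiv_fin s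
  exact ⟨r, Subtype.val ∘ e.symm, Subtype.val_injective.comp e.symm.injective, by simp⟩

lemma self_mem_parallelepiped {ι E : Type*} [Fintype ι] [AddCommGroup E] [Module ℝ E]
    (f : ι → E) (j : ι) : f j ∈ parallelepiped f := by
  classical
  refine (mem_parallelepiped_iff f _).2 ⟨Pi.single j 1, ⟨Pi.single_nonneg.2 zero_le_one, ?_⟩, ?_⟩
  · exact update_le_iff.2 ⟨le_rfl, fun _ _ => zero_le_one⟩
  · simp [Pi.single_apply]

section Lattice

variable {ι L E : Type*} [Fintype ι] [AddCommGroup L] [AddCommGroup E] [Module ℝ E]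

lemma exists_fract_floor_decomposition (φ : L →+ E) (w : ι → L) {u : L}
    (hu : φ u ∈ PointedCone.hull ℝ (Set.range (φ ∘ w))) :
    ∃ (s : L) (m : ι → ℕ), φ s ∈ parallelepiped (φ ∘ w) ∧ u = s + ∑ j, m j • w j ∧
      gauge (originHull (φ ∘ w)) (φ u) =
        gauge (originHull (φ ∘ w)) (φ s) + ∑ j, m j * gauge (originHull (φ ∘ w)) (φ (w j)) := by
  obtain ⟨c, hc, hcu⟩ := exists_isMinimalCombination hu
  have hfract : φ (u - ∑ j, ⌊c j⌋₊ • w j) =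
      Fintype.linearCombination ℝ (φ ∘ w) fun j => Int.fract (c j) := by
    simp [← hcu, Fintype.linearCombination_apply, ← Finset.sum_sub_distrib, Int.fract, sub_smul,
      ← natCast_floor_eq_intCast_floor (hc.nonneg _), Nat.cast_smul_eq_nsmul]
  refine ⟨u - ∑ j, ⌊c j⌋₊ • w j, fun j => ⌊c j⌋₊, ?_, (sub_add_cancel _ _).symm, ?_⟩
  · exact (mem_parallelepiped_iff _ _).2 ⟨fun j => Int.fract (c j),
      ⟨fun j => Int.fract_nonneg _, fun j => (Int.fract_lt_one _).le⟩, hfract⟩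
  · rw [hfract, ← hcu]
    exact hc.gauge_eq_gauge_fract_add

theorem weight_decomposition_general (φ : L →+ E) (w : ι → L) (u : L)
    (hu : φ u ∈ PointedCone.hull ℝ (Set.range (φ ∘ w))) :
    ∃ (r : ℕ) (t : Fin r → L) (v : Fin r → ℕ),
      (∀ i, φ (t i) ∈ parallelepiped (φ ∘ w)) ∧ (∀ i, 0 < v i) ∧ u = ∑ i, v i • t i ∧
      gauge (originHull (φ ∘ w)) (φ u) = ∑ i, v i * gauge (originHull (φ ∘ w)) (φ (t i)) := by
  obtain ⟨s, m, hs, hsum, hgauge⟩ := exists_fract_floor_decomposition φ w hu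
  let t : Option ι → L := fun o => o.elim s w
  let v : Option ι → ℕ := fun o => o.elim 1 m
  have ht : ∀ o, φ (t o) ∈ parallelepiped (φ ∘ w)
    | none => hs
    | some j => self_mem_parallelepiped (φ ∘ w) j
  obtain ⟨r, e, he, hrange⟩ := exists_fin_injective_range_eq (Function.support v)
  have hpos (i : Fin r) : v (e i) ≠ 0 := hrange.subset (Set.mem_range_self i)
  have hzero : ∀ o ∉ Set.range e, v o = 0 := by simp [hrange]
  refine ⟨r, fun i => t (e i), fun i => v (e i), fun i => ht (e i),
    fun i => Nat.pos_of_ne_zero (hpos i), ?_, ?_⟩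
  · rw [Fintype.sum_of_injective e he _ (fun o => v o • t o) (fun o ho => by simp [hzero o ho])
      fun _ => rfl]
    simpa [Fintype.sum_option, t, v] using hsum
  · rw [Fintype.sum_of_injective e he _ (fun o => v o * gauge (originHull (φ ∘ w)) (φ (t o)))
      (fun o ho => by simp [hzero o ho]) fun _ => rfl]
    simpa [Fintype.sum_option, t, v] using hgauge

end Lattice

section NewtonPolyhedron

variable {n N : ℕ} (w : Fin N → Fin n → ℤ)

lemma weight_eq_gauge (x : Fin n → ℝ) : weight n N w x = gauge (originHull (intToReal n ∘ w)) x :=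
  (gauge_eq_sInf_nonneg _ x).symm

lemma mem_deltaCone_iff {x : Fin n → ℝ} :
    x ∈ deltaCone n N w ↔ x ∈ PointedCone.hull ℝ (Set.range (intToReal n ∘ w)) := by
  rw [mem_pointedConeHull_range_iff]
  exact exists_congr fun c => and_congr_right fun _ => eq_comm

lemma mem_latticeS_iff {s : Fin n → ℤ} :
    s ∈ latticeS n N w ↔ intToReal n s ∈ parallelepiped (intToReal n ∘ w) := by
  rw [mem_parallelepiped_iff]
  exact exists_congr fun r => and_congr_left fun _ => forall_and

end NewtonPolyhedron

/-- every nonzero lattice point `u` of the cone `δ` can be written as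
`u = ∑ vᵢ tᵢ` with `tᵢ ∈ S`, `vᵢ` positive integers, and
`w(u) = ∑ vᵢ w(tᵢ)`. -/
theorem weight_decomposition
    (n N : ℕ) (hn : 1 ≤ n) (w : Fin N → Fin n → ℤ)
    (u : Fin n → ℤ) (hu : intToReal n u ∈ deltaCone n N w) (hu0 : u ≠ 0) :
    ∃ (r : ℕ) (t : Fin r → Fin n → ℤ) (v : Fin r → ℕ),
      (∀ i, t i ∈ latticeS n N w) ∧ (∀ i, 0 < v i) ∧
      u = ∑ i, (v i : ℤ) • t i ∧
      weight n N w (intToReal n u) = ∑ i, (v i : ℝ) * weight n N w (intToReal n (t i)) := by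
  simp only [weight_eq_gauge, mem_latticeS_iff, natCast_zsmul]
  exact weight_decomposition_general ((Int.castAddHom ℝ).compLeft (Fin n)) w u
    ((mem_deltaCone_iff w).1 hu)
end

section
/- For every integer l ≥ 0, ord(γ_l) ≥ p^{l+1}/(p−1) − (l+1). -/
open scoped Classical

/-- The additive valuation `ord x = -log_p ‖x‖`, with `ord 0 = +∞`, valued in `EReal`. -/
noncomputable def ord (p : ℕ) {K : Type*} [NormedField K] (x : K) : EReal :=
  if x = 0 then ⊤ else ((-Real.logb p ‖x‖ : ℝ) : EReal)

/-- The partial sum `γ_l = ∑_{i=0}^l γ^{p^i} / p^i`. -/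
noncomputable def gammaPartial (p : ℕ) {K : Type*} [NormedField K] (γ : K) (l : ℕ) : K :=
  ∑ i ∈ Finset.range (l + 1), γ ^ p ^ i / (p : K) ^ i

/-!
The exponents `c i = p^i / (p - 1) - i` satisfy `c (i + 1) - c i = p^i - 1 ≥ 0`, and
`ord (γ^(p^i) / p^i) ≥ c i`. The error made in truncating the series after the term of index `l` is
the tail starting at `l + 1`, all of whose terms have `ord` at least `c (l + 1)`; by the ultrametric
inequality, so has its sum.
-/

section Ord

variable {p : ℕ} {K : Type*} [NormedField K]

lemma coe_le_ord_iff_norm_le_rpow (hp : 1 < p) {x : K} {r : ℝ} :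
    (r : EReal) ≤ ord p x ↔ ‖x‖ ≤ (p : ℝ) ^ (-r) := by
  have hp' : (1 : ℝ) < p := Nat.one_lt_cast.2 hp
  rcases eq_or_ne x 0 with rfl | hx
  · simpa [ord] using Real.rpow_nonneg p.cast_nonneg (-r)
  · rw [ord, if_neg hx, EReal.coe_le_coe_iff, le_neg,
      Real.logb_le_iff_le_rpow hp' (norm_pos_iff.2 hx)]

lemma coe_mul_le_ord_pow (hp : 1 < p) {x : K} {r : ℝ} (hx : (r : EReal) ≤ ord p x) (n : ℕ) :
    ((n * r : ℝ) : EReal) ≤ ord p (x ^ n) := by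
  rw [coe_le_ord_iff_norm_le_rpow hp] at hx ⊢
  calc ‖x ^ n‖ = ‖x‖ ^ n := norm_pow x n
    _ ≤ ((p : ℝ) ^ (-r)) ^ n := pow_le_pow_left₀ (norm_nonneg x) hx n
    _ = (p : ℝ) ^ (-(n * r)) := by
      rw [← Real.rpow_mul_natCast p.cast_nonneg, neg_mul, mul_comm]

lemma coe_sub_le_ord_div_pow (hp : 1 < p) (hpnorm : (p : ℝ)⁻¹ ≤ ‖(p : K)‖) {x : K} {r : ℝ}
    (hx : (r : EReal) ≤ ord p x) (n : ℕ) :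
    ((r - n : ℝ) : EReal) ≤ ord p (x / (p : K) ^ n) := by
  have hp₀ : (0 : ℝ) < p := Nat.cast_pos.2 (Nat.zero_lt_of_lt hp)
  rw [coe_le_ord_iff_norm_le_rpow hp] at hx ⊢
  calc ‖x / (p : K) ^ n‖ = ‖x‖ / ‖(p : K)‖ ^ n := by rw [norm_div, norm_pow]
    _ ≤ (p : ℝ) ^ (-r) / ((p : ℝ)⁻¹) ^ n := by gcongr
    _ = (p : ℝ) ^ (-(r - n)) := by
      rw [inv_pow, div_inv_eq_mul, ← Real.rpow_add_natCast hp₀.ne', neg_sub, neg_add_eq_sub]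

lemma coe_le_ord_of_hasSum [IsUltrametricDist K] (hp : 1 < p) {ι : Type*} {f : ι → K} {a : K}
    (hf : HasSum f a) {r : ℝ} (hr : ∀ i, (r : EReal) ≤ ord p (f i)) :
    (r : EReal) ≤ ord p a := by
  simp only [coe_le_ord_iff_norm_le_rpow hp] at hr ⊢
  rw [← hf.tsum_eq]
  exact IsUltrametricDist.norm_tsum_le_of_forall_le_of_nonneg
    (Real.rpow_nonneg p.cast_nonneg _) hr

lemma coe_le_ord_sum_range_sub [IsUltrametricDist K] (hp : 1 < p) {f : ℕ → K} {a : K}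
    (hf : HasSum f a) {m : ℕ} {r : ℝ} (hr : ∀ i, m ≤ i → (r : EReal) ≤ ord p (f i)) :
    (r : EReal) ≤ ord p (∑ i ∈ Finset.range m, f i - a) := by
  have htail : HasSum (fun i => -f (i + m)) (∑ i ∈ Finset.range m, f i - a) := by
    simpa only [neg_sub] using ((hasSum_nat_add_iff' m).2 hf).neg
  refine coe_le_ord_of_hasSum hp htail fun i => ?_
  simpa only [ord, neg_eq_zero, norm_neg] using hr (i + m) (Nat.le_add_left m i)

end Ord

lemma monotone_pow_div_sub_one_sub {q : ℝ} (hq : 1 < q) :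
    Monotone fun i : ℕ => q ^ i / (q - 1) - i := by
  refine monotone_nat_of_le_succ fun i => ?_
  have hstep : q ^ (i + 1) / (q - 1) = q ^ i / (q - 1) + q ^ i := by
    field_simp [(sub_pos.2 hq).ne']
    ring
  have hone : 1 ≤ q ^ i := one_le_pow₀ hq.le
  push_cast
  linarith

lemma coe_le_ord_pow_pow_div_pow {p : ℕ} (hp : 1 < p) {K : Type*} [NormedField K]
    (hpnorm : (p : ℝ)⁻¹ ≤ ‖(p : K)‖) {γ : K}
    (hγ : ((1 / ((p : ℝ) - 1) : ℝ) : EReal) ≤ ord p γ) (i : ℕ) :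
    (((p : ℝ) ^ i / ((p : ℝ) - 1) - i : ℝ) : EReal) ≤ ord p (γ ^ p ^ i / (p : K) ^ i) := by
  have hpow := coe_mul_le_ord_pow hp hγ (p ^ i)
  rw [Nat.cast_pow, mul_one_div] at hpow
  exact coe_sub_le_ord_div_pow hp hpnorm hpow i

theorem ord_gammaPartial_ge_general {p : ℕ} (hp : 1 < p)
    {K : Type*} [NormedField K] [IsUltrametricDist K] (hpnorm : (p : ℝ)⁻¹ ≤ ‖(p : K)‖)
    {γ s : K} (hγ : ((1 / ((p : ℝ) - 1) : ℝ) : EReal) ≤ ord p γ)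
    (hsum : HasSum (fun i : ℕ => γ ^ p ^ i / (p : K) ^ i) s) (l : ℕ) :
    (((p : ℝ) ^ (l + 1) / ((p : ℝ) - 1) - (l + 1) : ℝ) : EReal) ≤
      ord p (gammaPartial p γ l - s) := by
  refine coe_le_ord_sum_range_sub hp hsum fun i hi => ?_
  have hmono := monotone_pow_div_sub_one_sub (Nat.one_lt_cast.2 hp) hi
  push_cast at hmono
  exact (EReal.coe_le_coe_iff.2 hmono).trans (coe_le_ord_pow_pow_div_pow hp hpnorm hγ i)

/-- `ord(γ_l) ≥ p^{l+1}/(p-1) - (l+1)` for every `l ≥ 0`. -/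
theorem ord_gammaPartial_ge (p : ℕ) (hp : p.Prime)
    {K : Type*} [NormedField K] [CompleteSpace K] [CharZero K]
    (hna : ∀ x y : K, ‖x + y‖ ≤ max ‖x‖ ‖y‖)
    (hpnorm : ‖(p : K)‖ = (p : ℝ)⁻¹)
    (γ : K) (hγ : ord p γ = ((1 / ((p : ℝ) - 1) : ℝ) : EReal))
    (hsum : HasSum (fun i : ℕ => γ ^ p ^ i / (p : K) ^ i) 0)
    (l : ℕ) :
    (((p : ℝ) ^ (l + 1) / ((p : ℝ) - 1) - (l + 1) : ℝ) : EReal) ≤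
      ord p (gammaPartial p γ l) := by
  have := IsUltrametricDist.isUltrametricDist_of_forall_norm_add_le_max_norm hna
  simpa only [sub_zero] using ord_gammaPartial_ge_general hp.one_lt hpnorm.ge hγ.ge hsum l
end

section
/- For every integer l ≥ 1 and every integer k ≥ 0, ord(γ_l^k / k!) ≥ ((p−1)/p)·k·p^l. -/
/-!
Since `∑ γ^{p^i}/p^i = 0`, the partial sum `γ_l` is minus the tail `∑_{i > l} γ^{p^i}/p^i`. The
orders `p^i/(p-1) - i` of the terms increase with `i`, so `ord γ_l ≥ p^{l+1}/(p-1) - (l+1)`, while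
`ord k! ≤ k/(p-1)` by Legendre's formula. Since `p^n/(p-1) - n = 1/(p-1) + ∑_{j<n} (p^j - 1)`, these
two bounds give `ord (γ_l^k/k!) ≥ k ∑_{j≤l} (p^j - 1)`, and already the last summand
`p^l - 1 ≥ p^l - p^{l-1}` suffices.
-/

open scoped Classical

section OrderedField

variable {𝕜 : Type*} [Field 𝕜] {x : 𝕜}

lemma pow_div_sub_one_sub_natCast (hx : x ≠ 1) (n : ℕ) :
    x ^ n / (x - 1) - n = 1 / (x - 1) + ∑ j ∈ Finset.range n, (x ^ j - 1) := by
  rw [Finset.sum_sub_distrib, geom_sum_eq hx, Finset.sum_const, Finset.card_range, nsmul_one]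
  ring

variable [LinearOrder 𝕜] [IsStrictOrderedRing 𝕜]

lemma monotone_pow_div_sub_one_sub_natCast (hx : 1 < x) :
    Monotone fun n : ℕ => x ^ n / (x - 1) - n := by
  refine monotone_nat_of_le_succ fun n => ?_
  simp only [pow_div_sub_one_sub_natCast hx.ne', Finset.sum_range_succ, ← add_assoc]
  exact le_add_of_nonneg_right (sub_nonneg.mpr (one_le_pow₀ hx.le))

lemma sub_one_div_mul_pow_le (hx : 1 < x) {l : ℕ} (hl : 1 ≤ l) :
    (x - 1) / x * x ^ l ≤ x ^ (l + 1) / (x - 1) - (l + 1 : ℕ) - 1 / (x - 1) := by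
  obtain ⟨m, rfl⟩ := Nat.exists_eq_add_of_le' hl
  have one_le_pow (j : ℕ) : 1 ≤ x ^ j := one_le_pow₀ hx.le
  calc (x - 1) / x * x ^ (m + 1) = x ^ (m + 1) - x ^ m := by
        have : x ≠ 0 := (zero_lt_one.trans hx).ne'
        field_simp
        ring
    _ ≤ x ^ (m + 1) - 1 := sub_le_sub_left (one_le_pow m) _
    _ ≤ ∑ j ∈ Finset.range (m + 1 + 1), (x ^ j - 1) :=
        Finset.single_le_sum (f := fun j => x ^ j - 1) (fun j _ => sub_nonneg.mpr (one_le_pow j))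
          (Finset.self_mem_range_succ _)
    _ = x ^ (m + 1 + 1) / (x - 1) - (m + 1 + 1 : ℕ) - 1 / (x - 1) := by
        rw [pow_div_sub_one_sub_natCast hx.ne', add_sub_cancel_left]

end OrderedField

section Ultrametric

lemma norm_sub_sum_le_of_hasSum {ι E : Type*} [SeminormedAddCommGroup E] [IsUltrametricDist E]
    {f : ι → E} {a : E} (hf : HasSum f a) {s : Finset ι} {C : ℝ} (hC : 0 ≤ C)
    (hfC : ∀ i ∉ s, ‖f i‖ ≤ C) : ‖a - ∑ i ∈ s, f i‖ ≤ C := by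
  have tail : HasSum (fun i : {i // i ∉ s} => f i) (a - ∑ i ∈ s, f i) := by
    rwa [s.hasSum_compl_iff, sub_add_cancel]
  exact le_of_tendsto' tail.norm fun t =>
    IsUltrametricDist.norm_sum_le_of_forall_le_of_nonneg hC fun i _ => hfC i i.2

lemma norm_natCast_eq_one_of_coprime {R : Type*} [SeminormedRing R] [NormOneClass R]
    [IsUltrametricDist R] {m n : ℕ} (hn : ‖(n : R)‖ < 1) (hmn : m.Coprime n) :
    ‖(m : R)‖ = 1 := by
  refine (IsUltrametricDist.norm_natCast_le_one R m).antisymm ?_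
  have norm_intCast_mul_le (c : ℤ) (y : R) : ‖c * y‖ ≤ ‖y‖ :=
    (norm_mul_le _ _).trans
      (mul_le_of_le_one_left (norm_nonneg _) (IsUltrametricDist.norm_intCast_le_one R c))
  obtain ⟨a, b, bezout⟩ := Nat.isCoprime_iff_coprime.mpr hmn
  have bezout_cast : (a * m + b * n : R) = 1 := mod_cast congrArg (Int.cast : ℤ → R) bezout
  have one_le_max : 1 ≤ max ‖(a * m : R)‖ ‖(b * n : R)‖ := by
    simpa only [bezout_cast, norm_one] using IsUltrametricDist.norm_add_le_max (a * m : R) (b * n)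
  rcases le_max_iff.mp one_le_max with h | h
  · exact h.trans (norm_intCast_mul_le a m)
  · exact absurd (h.trans (norm_intCast_mul_le b n)) hn.not_ge

lemma norm_natCast_eq_norm_pow_factorization {R : Type*} [SeminormedRing R] [NormOneClass R]
    [NormMulClass R] [IsUltrametricDist R] {p n : ℕ} (hp : p.Prime) (hpR : ‖(p : R)‖ < 1)
    (hn : n ≠ 0) : ‖(n : R)‖ = ‖(p : R)‖ ^ n.factorization p := by
  conv_lhs => rw [← Nat.ordProj_mul_ordCompl_eq_self n p]
  rw [Nat.cast_mul, Nat.cast_pow, norm_mul, norm_pow,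
    norm_natCast_eq_one_of_coprime hpR (Nat.coprime_ordCompl hp hn).symm, mul_one]

end Ultrametric

section Ord

variable {K : Type*} [NormedField K] {p : ℕ}

lemma coe_le_ord_iff (hp : 1 < p) {x : K} {c : ℝ} :
    (c : EReal) ≤ ord p x ↔ ‖x‖ ≤ (p : ℝ) ^ (-c) := by
  rcases eq_or_ne x 0 with rfl | hx
  · simp [ord, Real.rpow_nonneg]
  · rw [ord, if_neg hx, EReal.coe_le_coe_iff, le_neg,
      Real.logb_le_iff_le_rpow (mod_cast hp) (norm_pos_iff.mpr hx)]

lemma ord_le_coe_iff (hp : 1 < p) {x : K} {c : ℝ} :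
    ord p x ≤ c ↔ (p : ℝ) ^ (-c) ≤ ‖x‖ := by
  rcases eq_or_ne x 0 with rfl | hx
  · simp [ord, Real.rpow_pos_of_pos (show (0 : ℝ) < p by positivity)]
  · rw [ord, if_neg hx, EReal.coe_le_coe_iff, neg_le,
      Real.le_logb_iff_rpow_le (mod_cast hp) (norm_pos_iff.mpr hx)]

lemma coe_le_ord_pow_div (hp : 1 < p) {x y : K} {a b : ℝ} (hx : a ≤ ord p x)
    (hy : ord p y ≤ b) (n : ℕ) : ((n * a - b : ℝ) : EReal) ≤ ord p (x ^ n / y) := by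
  rw [coe_le_ord_iff hp] at hx ⊢
  rw [ord_le_coe_iff hp] at hy
  have hp₀ : (0 : ℝ) < p := by positivity
  calc ‖x ^ n / y‖ = ‖x‖ ^ n / ‖y‖ := by rw [norm_div, norm_pow]
    _ ≤ ((p : ℝ) ^ (-a)) ^ n / (p : ℝ) ^ (-b) := by gcongr
    _ = (p : ℝ) ^ (-(n * a - b)) := by
        rw [← Real.rpow_mul_natCast hp₀.le, ← Real.rpow_sub hp₀]
        ring_nf

variable [IsUltrametricDist K]

lemma coe_le_ord_sum_of_hasSum_zero {ι : Type*} (hp : 1 < p) {f : ι → K} (hf : HasSum f 0)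
    {s : Finset ι} {c : ℝ} (hc : ∀ i ∉ s, (c : EReal) ≤ ord p (f i)) :
    (c : EReal) ≤ ord p (∑ i ∈ s, f i) := by
  simp only [coe_le_ord_iff hp] at hc ⊢
  simpa only [zero_sub, norm_neg] using norm_sub_sum_le_of_hasSum hf (by positivity) hc

lemma ord_natCast (hp : p.Prime) (hpnorm : ‖(p : K)‖ = (p : ℝ)⁻¹) {n : ℕ} (hn : n ≠ 0) :
    ord p (n : K) = ((n.factorization p : ℝ) : EReal) := by
  have hp₁ : (1 : ℝ) < p := mod_cast hp.one_lt
  have hpK : ‖(p : K)‖ < 1 := hpnorm ▸ inv_lt_one_of_one_lt₀ hp₁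
  have norm_n : ‖(n : K)‖ = (p : ℝ)⁻¹ ^ n.factorization p := by
    rw [norm_natCast_eq_norm_pow_factorization hp hpK hn, hpnorm]
  have hnK : (n : K) ≠ 0 := norm_pos_iff.mp (norm_n ▸ by positivity)
  rw [ord, if_neg hnK, norm_n, Real.logb_pow, Real.logb_inv, Real.logb_self_eq_one hp₁]
  simp

lemma ord_factorial_le (hp : p.Prime) (hpnorm : ‖(p : K)‖ = (p : ℝ)⁻¹) (k : ℕ) :
    ord p (k.factorial : K) ≤ ((k / ((p : ℝ) - 1) : ℝ) : EReal) := by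
  have hp₁ : (1 : ℝ) < p := mod_cast hp.one_lt
  have legendre : (p - 1) * k.factorial.factorization p ≤ k :=
    (Nat.sub_one_mul_factorization_factorial hp).trans_le (Nat.sub_le _ _)
  rw [ord_natCast hp hpnorm k.factorial_ne_zero, EReal.coe_le_coe_iff,
    le_div_iff₀' (sub_pos.mpr hp₁), ← Nat.cast_pred hp.pos]
  exact_mod_cast legendre

lemma coe_le_ord_pow_prime_pow_div (hp : p.Prime) (hpnorm : ‖(p : K)‖ = (p : ℝ)⁻¹) {γ : K}
    (hγ : ((1 / ((p : ℝ) - 1) : ℝ) : EReal) ≤ ord p γ) (i : ℕ) :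
    (((p : ℝ) ^ i / ((p : ℝ) - 1) - i : ℝ) : EReal) ≤ ord p (γ ^ p ^ i / (p : K) ^ i) := by
  have ord_p_pow : ord p ((p : K) ^ i) = (i : ℝ) := by
    rw [← Nat.cast_pow, ord_natCast hp hpnorm (pow_ne_zero i hp.ne_zero),
      Nat.factorization_pow_self hp]
  simpa only [Nat.cast_pow, mul_one_div] using
    coe_le_ord_pow_div hp.one_lt hγ ord_p_pow.le (p ^ i)

lemma coe_le_ord_gammaPartial (hp : p.Prime) (hpnorm : ‖(p : K)‖ = (p : ℝ)⁻¹) {γ : K}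
    (hγ : ((1 / ((p : ℝ) - 1) : ℝ) : EReal) ≤ ord p γ)
    (hsum : HasSum (fun i : ℕ => γ ^ p ^ i / (p : K) ^ i) 0) (l : ℕ) :
    (((p : ℝ) ^ (l + 1) / ((p : ℝ) - 1) - (l + 1 : ℕ) : ℝ) : EReal) ≤
      ord p (gammaPartial p γ l) := by
  refine coe_le_ord_sum_of_hasSum_zero hp.one_lt hsum fun i hi => ?_
  have hli : l + 1 ≤ i := not_lt.mp (Finset.mem_range.not.mp hi)
  have term_mono := monotone_pow_div_sub_one_sub_natCast (x := (p : ℝ)) (mod_cast hp.one_lt) hli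
  exact (EReal.coe_le_coe term_mono).trans (coe_le_ord_pow_prime_pow_div hp hpnorm hγ i)

end Ord

theorem ord_gammaPartial_pow_div_factorial_ge_general {p : ℕ} (hp : p.Prime)
    {K : Type*} [NormedField K] [IsUltrametricDist K] (hpnorm : ‖(p : K)‖ = (p : ℝ)⁻¹)
    {γ : K} (hγ : ((1 / ((p : ℝ) - 1) : ℝ) : EReal) ≤ ord p γ)
    (hsum : HasSum (fun i : ℕ => γ ^ p ^ i / (p : K) ^ i) 0)
    {l : ℕ} (hl : 1 ≤ l) (k : ℕ) :
    ((((p : ℝ) - 1) / (p : ℝ) * k * (p : ℝ) ^ l : ℝ) : EReal) ≤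
      ord p (gammaPartial p γ l ^ k / (k.factorial : K)) := by
  have bound : ((p : ℝ) - 1) / p * k * (p : ℝ) ^ l ≤
      k * ((p : ℝ) ^ (l + 1) / ((p : ℝ) - 1) - (l + 1 : ℕ)) - k / ((p : ℝ) - 1) :=
    calc ((p : ℝ) - 1) / p * k * (p : ℝ) ^ l = k * (((p : ℝ) - 1) / p * (p : ℝ) ^ l) := by ring
      _ ≤ k * ((p : ℝ) ^ (l + 1) / ((p : ℝ) - 1) - (l + 1 : ℕ) - 1 / ((p : ℝ) - 1)) := by
          gcongr
          exact sub_one_div_mul_pow_le (mod_cast hp.one_lt) hl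
      _ = _ := by ring
  exact (EReal.coe_le_coe bound).trans
    (coe_le_ord_pow_div hp.one_lt (coe_le_ord_gammaPartial hp hpnorm hγ hsum l)
      (ord_factorial_le hp hpnorm k) k)

/-- for `l ≥ 1` and `k ≥ 0`, `ord(γ_l^k / k!) ≥ ((p-1)/p)·k·p^l`. -/
theorem ord_gammaPartial_pow_div_factorial_ge (p : ℕ) (hp : p.Prime)
    {K : Type*} [NormedField K] [CompleteSpace K] [CharZero K]
    (hna : ∀ x y : K, ‖x + y‖ ≤ max ‖x‖ ‖y‖)
    (hpnorm : ‖(p : K)‖ = (p : ℝ)⁻¹)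
    (γ : K) (hγ : ord p γ = ((1 / ((p : ℝ) - 1) : ℝ) : EReal))
    (hsum : HasSum (fun i : ℕ => γ ^ p ^ i / (p : K) ^ i) 0)
    (l : ℕ) (hl : 1 ≤ l) (k : ℕ) :
    ((((p : ℝ) - 1) / (p : ℝ) * k * (p : ℝ) ^ l : ℝ) : EReal) ≤
      ord p (gammaPartial p γ l ^ k / (Nat.factorial k : K)) := by
  have := IsUltrametricDist.isUltrametricDist_of_forall_norm_add_le_max_norm hna
  exact ord_gammaPartial_pow_div_factorial_ge_general hp hpnorm hγ.ge hsum hl k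
end
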